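/- Let 1 ≤ l ≤ n and for 1 ≤ i ≤ l let (f_{i,ε}) be c-bounded moderate nets of smooth functions ℝ^{n−i} → ℝ. For each ε define Ψ_ε : ℝ^n → ℝ^n by Ψ_ε(y) = (y₁ − f_{1,ε}(y₂,…,y_n), y₂ − f_{2,ε}(y₃,…,y_n), …, y_l − f_{l,ε}(y_{l+1},…,y_n), y_{l+1}, …, y_n). Then: (a) each Ψ_ε is a smooth diffeomorphism of ℝ^n whose inverse sends x to the point y determined recursively by y_i = x_i for i > l and y_i = x_i + f_{i,ε}(y_{i+1},…,y_n) for i = l, l−1, …, 1; (b) both nets (Ψ_ε) and (Ψ_ε^{−1}) are c-bounded and moderate; (c) defining F_ε : ℝ^n → ℝ^l by F_{k,ε}(x) = x_k − f_{k,ε}(x_{k+1},…,x_n) for 1 ≤ k ≤ l, one has F_ε ∘ Ψ_ε^{−1}(x) = (x₁,…,x_l) for all x ∈ ℝ^n and all ε. Thus Ψ is a global generalized chart in which F becomes the projection onto the first l coordinates. -/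

import Mathlib

/-!
The map `Ψ_ε` is unipotent triangular, so it is inverted by back substitution: `Ψ_ε y = x` says
that `y` is a fixed point of `y ↦ x + f_ε(y)` (with `f_{i,ε}` read as `0` for `i > l`). Iterating
this map from `x`, the last `m` coordinates are stationary after `m` steps, because `f_{i,ε}` only
sees the coordinates after `i` (`backSubst_stable`); hence the `n`-th iterate is the fixed point,
for every `ε`. The same triangularity makes fixed points unique, so this iterate is the inverse.

Each iterate is obtained from the identity by finitely many sums and compositions with the nets
`f_i`. Smoothness and c-boundedness obviously survive these operations. So does
moderateness: this is `EvModerate.comp`, where c-boundedness of the inner net confines its values on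
a compact set to a fixed compact set, on which the outer derivatives are controlled, and the
Faà di Bruno estimate `norm_iteratedFDeriv_comp_le` then bounds the derivatives of the composite
by a power of `1/ε`.
-/

open Topology Filter Set

/-- A net of smooth real-valued functions on a normed space is moderate: on each compact
set, every iterated derivative grows at most like some negative power of `ε`. -/
def ModerateF {E : Type*} [NormedAddCommGroup E] [NormedSpace ℝ E]
    (u : ℝ → E → ℝ) : Prop :=
  ∀ K : Set E, IsCompact K → ∀ k : ℕ, ∃ p : ℕ, ∃ C > (0:ℝ), ∃ ε₀ > (0:ℝ),
    ∀ ε : ℝ, 0 < ε → ε < ε₀ → ∀ x ∈ K, ‖iteratedFDeriv ℝ k (u ε) x‖ ≤ C / ε ^ p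

/-- A net of maps into `ℝ^n` is moderate if each component is moderate. -/
def ModerateV {E : Type*} [NormedAddCommGroup E] [NormedSpace ℝ E] {n : ℕ}
    (u : ℝ → E → (Fin n → ℝ)) : Prop :=
  ∀ i : Fin n, ModerateF (fun ε x => u ε x i)

/-- A net of maps is c-bounded: each compact set is mapped into a fixed compact set
for small `ε`. -/
def CBoundedMap {X Y : Type*} [TopologicalSpace X] [TopologicalSpace Y]
    (u : ℝ → X → Y) : Prop :=
  ∀ K : Set X, IsCompact K → ∃ ε₀ > (0:ℝ), ∃ K' : Set Y, IsCompact K' ∧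
    ∀ ε : ℝ, 0 < ε → ε < ε₀ → ∀ x ∈ K, u ε x ∈ K'

/-- The phrase: for all sufficiently small `ε > 0`, in terms of the filter `𝓝[>] 0`. -/
lemma eventually_pos_small_iff {P : ℝ → Prop} :
    (∀ᶠ ε in 𝓝[>] (0:ℝ), P ε) ↔ ∃ ε₀ > (0:ℝ), ∀ ε : ℝ, 0 < ε → ε < ε₀ → P ε := by
  constructor
  · intro h
    obtain ⟨u, hu, hs⟩ := mem_nhdsGT_iff_exists_Ioo_subset.1 h
    exact ⟨u, hu, fun ε h1 h2 => hs ⟨h1, h2⟩⟩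
  · rintro ⟨u, hu, hs⟩
    exact mem_nhdsGT_iff_exists_Ioo_subset.2 ⟨u, hu, fun ε hε => hs ε hε.1 hε.2⟩

lemma eventually_Ioc : ∀ᶠ ε in 𝓝[>] (0:ℝ), ε ∈ Set.Ioc (0:ℝ) 1 :=
  eventually_pos_small_iff.2 ⟨1, one_pos, fun _ h1 h2 => ⟨h1, h2.le⟩⟩

lemma eventually_one_le_inv : ∀ᶠ ε in 𝓝[>] (0:ℝ), 1 ≤ ε⁻¹ := by
  filter_upwards [eventually_Ioc] with ε hε
  exact (one_le_inv₀ hε.1).2 hε.2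

lemma eventually_const_le_inv (C : ℝ) : ∀ᶠ ε in 𝓝[>] (0:ℝ), C ≤ ε⁻¹ :=
  tendsto_inv_nhdsGT_zero.eventually_ge_atTop C

/-! ### Moderate nets -/

/-- Moderateness for nets with values in any normed space. The multiplicative constant of
`ModerateF` is absorbed into the power of `ε⁻¹`. -/
def EvModerate {E F : Type*} [NormedAddCommGroup E] [NormedSpace ℝ E]
    [NormedAddCommGroup F] [NormedSpace ℝ F] (u : ℝ → E → F) : Prop :=
  ∀ K : Set E, IsCompact K → ∀ k : ℕ, ∃ p : ℕ, ∀ᶠ ε in 𝓝[>] (0:ℝ),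
    ∀ x ∈ K, ‖iteratedFDeriv ℝ k (u ε) x‖ ≤ (ε⁻¹) ^ p

section Moderate

variable {E F G : Type*} [NormedAddCommGroup E] [NormedSpace ℝ E]
    [NormedAddCommGroup F] [NormedSpace ℝ F] [NormedAddCommGroup G] [NormedSpace ℝ G]

lemma moderateF_iff_evModerate {u : ℝ → E → ℝ} : ModerateF u ↔ EvModerate u := by
  constructor
  · intro h K hK k
    obtain ⟨p, C, hC, h⟩ := h K hK k
    refine ⟨p + 1, ?_⟩
    filter_upwards [eventually_pos_small_iff.2 h, eventually_const_le_inv C, eventually_one_le_inv]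
      with ε hε hCε h1 x hx
    calc _ ≤ C / ε ^ p := hε x hx
      _ = (ε⁻¹) ^ p * C := by rw [div_eq_mul_inv, inv_pow, mul_comm]
      _ ≤ (ε⁻¹) ^ p * ε⁻¹ := by gcongr
      _ = _ := (pow_succ _ _).symm
  · intro h K hK k
    obtain ⟨p, h⟩ := h K hK k
    refine ⟨p, 1, one_pos, eventually_pos_small_iff.1 ?_⟩
    filter_upwards [h] with ε hε x hx
    rw [one_div, ← inv_pow]
    exact hε x hx

/-- The exponent can be chosen uniformly for all derivatives of order at most `k`. -/
lemma EvModerate.uniform {u : ℝ → E → F} (h : EvModerate u) {K : Set E} (hK : IsCompact K)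
    (k : ℕ) : ∃ p : ℕ, ∀ᶠ ε in 𝓝[>] (0:ℝ),
      ∀ i ≤ k, ∀ x ∈ K, ‖iteratedFDeriv ℝ i (u ε) x‖ ≤ (ε⁻¹) ^ p := by
  choose p hp using h K hK
  refine ⟨(Finset.range (k + 1)).sup p, ?_⟩
  have hall : ∀ᶠ ε in 𝓝[>] (0:ℝ), ∀ i ∈ Finset.range (k + 1), ∀ x ∈ K,
      ‖iteratedFDeriv ℝ i (u ε) x‖ ≤ (ε⁻¹) ^ p i :=
    (Finset.eventually_all _).2 fun i _ => hp i
  filter_upwards [hall, eventually_one_le_inv] with ε hε h1 i hi x hx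
  have hi' : i ∈ Finset.range (k + 1) := Finset.mem_range.2 (by omega)
  exact (hε i hi' x hx).trans (pow_le_pow_right₀ h1 (Finset.le_sup hi'))

lemma EvModerate.const {u : E → F} (hu : ContDiff ℝ (⊤ : ℕ∞) u) :
    EvModerate (fun _ : ℝ => u) := by
  intro K hK k
  obtain ⟨C, hC⟩ := hK.exists_bound_of_continuousOn
    (hu.continuous_iteratedFDeriv (m := k) (mod_cast le_top)).continuousOn
  refine ⟨1, ?_⟩
  filter_upwards [eventually_const_le_inv C] with ε hε x hx
  simpa using (hC x hx).trans hε

lemma EvModerate.neg {u : ℝ → E → F} (h : EvModerate u) : EvModerate (fun ε => -u ε) := by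
  intro K hK k
  obtain ⟨p, h⟩ := h K hK k
  refine ⟨p, ?_⟩
  filter_upwards [h] with ε hε x hx
  rw [iteratedFDeriv_neg_apply, norm_neg]
  exact hε x hx

lemma EvModerate.add {u v : ℝ → E → F} (hu : EvModerate u) (hv : EvModerate v)
    (hus : ∀ ε ∈ Set.Ioc (0:ℝ) 1, ContDiff ℝ (⊤ : ℕ∞) (u ε))
    (hvs : ∀ ε ∈ Set.Ioc (0:ℝ) 1, ContDiff ℝ (⊤ : ℕ∞) (v ε)) :
    EvModerate (fun ε => u ε + v ε) := by
  intro K hK k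
  obtain ⟨p, hu⟩ := hu K hK k
  obtain ⟨q, hv⟩ := hv K hK k
  refine ⟨p + q + 1, ?_⟩
  filter_upwards [hu, hv, eventually_Ioc, eventually_one_le_inv, eventually_const_le_inv 2]
    with ε hu hv hε h1 h2 x hx
  rw [iteratedFDeriv_add_apply ((hus ε hε).of_le (mod_cast le_top)).contDiffAt
    ((hvs ε hε).of_le (mod_cast le_top)).contDiffAt]
  have hp : (ε⁻¹) ^ p ≤ (ε⁻¹) ^ (p + q) := pow_le_pow_right₀ h1 (by omega)
  have hq : (ε⁻¹) ^ q ≤ (ε⁻¹) ^ (p + q) := pow_le_pow_right₀ h1 (by omega)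
  calc _ ≤ (ε⁻¹) ^ p + (ε⁻¹) ^ q := (norm_add_le _ _).trans <| add_le_add (hu x hx) (hv x hx)
    _ ≤ (ε⁻¹) ^ (p + q) * 2 := by linarith
    _ ≤ (ε⁻¹) ^ (p + q) * ε⁻¹ := by gcongr
    _ = _ := (pow_succ _ _).symm

/-- A moderate net composed with a c-bounded moderate net is moderate. -/
lemma EvModerate.comp {g : ℝ → F → G} {u : ℝ → E → F} (hg : EvModerate g) (hu : EvModerate u)
    (hgs : ∀ ε ∈ Set.Ioc (0:ℝ) 1, ContDiff ℝ (⊤ : ℕ∞) (g ε))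
    (hus : ∀ ε ∈ Set.Ioc (0:ℝ) 1, ContDiff ℝ (⊤ : ℕ∞) (u ε))
    (huc : CBoundedMap u) : EvModerate (fun ε => g ε ∘ u ε) := by
  intro K hK k
  obtain ⟨ε₀, hε₀, K', hK', hKK'⟩ := huc K hK
  obtain ⟨p, hg⟩ := hg.uniform hK' k
  obtain ⟨q, hu⟩ := hu.uniform hK k
  refine ⟨1 + p + q * k, ?_⟩
  filter_upwards [hg, hu, eventually_pos_small_iff.2 ⟨ε₀, hε₀, hKK'⟩, eventually_Ioc,
    eventually_one_le_inv, eventually_const_le_inv (k.factorial : ℝ)] with ε hg hu hm hε h1 h2 x hx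
  calc _ ≤ (k.factorial : ℝ) * (ε⁻¹) ^ p * ((ε⁻¹) ^ q) ^ k :=
        norm_iteratedFDeriv_comp_le (hgs ε hε) (hus ε hε) (mod_cast le_top) x
          (fun i hi => hg i hi _ (hm x hx))
          (fun i hi hik => (hu i hik x hx).trans
            (le_self_pow₀ (one_le_pow₀ h1) (by omega)))
    _ ≤ ε⁻¹ * (ε⁻¹) ^ p * ((ε⁻¹) ^ q) ^ k := by gcongr
    _ = _ := by rw [pow_add, pow_add, pow_one, pow_mul]

lemma norm_iteratedFDeriv_le_of_apply {n : ℕ} {u : E → Fin n → ℝ} {k : ℕ} {C : ℝ} (hC : 0 ≤ C)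
    {x : E} (hu : ContDiff ℝ (⊤ : ℕ∞) u)
    (h : ∀ i, ‖iteratedFDeriv ℝ k (fun y => u y i) x‖ ≤ C) :
    ‖iteratedFDeriv ℝ k u x‖ ≤ C := by
  refine ContinuousMultilinearMap.opNorm_le_bound hC fun m => ?_
  refine (pi_norm_le_iff_of_nonneg (by positivity)).2 fun i => ?_
  have key := (ContinuousLinearMap.proj (R := ℝ) (φ := fun _ : Fin n => ℝ) i).iteratedFDeriv_comp_left
    (hu.contDiffAt (x := x)) (i := k) (mod_cast le_top)
  have heq : iteratedFDeriv ℝ k u x m i = iteratedFDeriv ℝ k (fun y => u y i) x m :=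
    (congrArg (fun L => L m) key).symm
  rw [heq]
  exact ContinuousMultilinearMap.le_of_opNorm_le (h i) m

lemma EvModerate.of_apply {n : ℕ} {u : ℝ → E → Fin n → ℝ}
    (hus : ∀ ε ∈ Set.Ioc (0:ℝ) 1, ContDiff ℝ (⊤ : ℕ∞) (u ε))
    (h : ∀ i, EvModerate (fun ε x => u ε x i)) : EvModerate u := by
  intro K hK k
  choose p hp using fun i => h i K hK k
  refine ⟨Finset.univ.sup p, ?_⟩
  filter_upwards [eventually_all.2 hp, eventually_Ioc, eventually_one_le_inv] with ε hε h0 h1 x hx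
  exact norm_iteratedFDeriv_le_of_apply (by positivity) (hus ε h0) fun i =>
    (hε i x hx).trans (pow_le_pow_right₀ h1 (Finset.le_sup (Finset.mem_univ i)))

end Moderate

/-! ### c-bounded nets -/

section CBounded

variable {X Y Z : Type*} [TopologicalSpace X] [TopologicalSpace Y] [TopologicalSpace Z]

lemma cBoundedMap_iff {u : ℝ → X → Y} : CBoundedMap u ↔ ∀ K : Set X, IsCompact K →
    ∃ K' : Set Y, IsCompact K' ∧ ∀ᶠ ε in 𝓝[>] (0:ℝ), ∀ x ∈ K, u ε x ∈ K' := by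
  simp only [eventually_pos_small_iff]
  constructor
  · intro h K hK
    obtain ⟨ε₀, h0, K', hK', h⟩ := h K hK
    exact ⟨K', hK', ε₀, h0, h⟩
  · intro h K hK
    obtain ⟨K', hK', ε₀, h0, h⟩ := h K hK
    exact ⟨ε₀, h0, K', hK', h⟩

lemma CBoundedMap.const {u : X → Y} (hu : Continuous u) : CBoundedMap (fun _ : ℝ => u) :=
  cBoundedMap_iff.2 fun K hK => ⟨u '' K, hK.image hu, .of_forall fun _ _ hx => ⟨_, hx, rfl⟩⟩

lemma CBoundedMap.comp {g : ℝ → Y → Z} {u : ℝ → X → Y} (hg : CBoundedMap g)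
    (hu : CBoundedMap u) : CBoundedMap (fun ε x => g ε (u ε x)) := by
  rw [cBoundedMap_iff] at *
  intro K hK
  obtain ⟨K', hK', hu⟩ := hu K hK
  obtain ⟨K'', hK'', hg⟩ := hg K' hK'
  refine ⟨K'', hK'', ?_⟩
  filter_upwards [hu, hg] with ε hu hg x hx using hg _ (hu x hx)

lemma CBoundedMap.prodMk {u : ℝ → X → Y} {v : ℝ → X → Z} (hu : CBoundedMap u)
    (hv : CBoundedMap v) : CBoundedMap (fun ε x => (u ε x, v ε x)) := by
  rw [cBoundedMap_iff] at *
  intro K hK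
  obtain ⟨K₁, hK₁, hu⟩ := hu K hK
  obtain ⟨K₂, hK₂, hv⟩ := hv K hK
  refine ⟨K₁ ×ˢ K₂, hK₁.prod hK₂, ?_⟩
  filter_upwards [hu, hv] with ε hu hv x hx using ⟨hu x hx, hv x hx⟩

lemma CBoundedMap.of_apply {n : ℕ} {u : ℝ → X → Fin n → ℝ}
    (h : ∀ i, CBoundedMap (fun ε x => u ε x i)) : CBoundedMap u := by
  simp only [cBoundedMap_iff] at *
  intro K hK
  choose K' hK' h using fun i => h i K hK
  refine ⟨Set.univ.pi K', isCompact_univ_pi hK', ?_⟩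
  filter_upwards [eventually_all.2 h] with ε h x hx i _ using h i x hx

end CBounded

/-! ### Back substitution -/

/-- The `m`-th iterate, started at `x`, of the map `y ↦ x + f(y)`, where `f_i` is replaced by `0`
for the (zero-based) indices `i ≥ l`. -/
noncomputable def backSubst {n : ℕ} (l : ℕ) (f : Fin n → (Fin n → ℝ) → ℝ) :
    ℕ → (Fin n → ℝ) → (Fin n → ℝ)
  | 0, x => x
  | m + 1, x => fun i => if (i : ℕ) < l then x i + f i (backSubst l f m x) else x i

/-- After `m` steps the last `m` coordinates no longer change. -/
lemma backSubst_stable {n l : ℕ} {f : Fin n → (Fin n → ℝ) → ℝ}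
    (hdep : ∀ i : Fin n, (i : ℕ) < l → ∀ y z : Fin n → ℝ,
      (∀ j : Fin n, i < j → y j = z j) → f i y = f i z) (x : Fin n → ℝ) (m : ℕ) :
    ∀ i : Fin n, n ≤ i + m → backSubst l f (m + 1) x i = backSubst l f m x i := by
  induction m with
  | zero => intro i hi; omega
  | succ m ih =>
    intro i hi
    change (if (i : ℕ) < l then x i + f i (backSubst l f (m + 1) x) else x i) =
      (if (i : ℕ) < l then x i + f i (backSubst l f m x) else x i)
    split_ifs with hil
    · rw [hdep i hil _ _ fun j hj => ih j (by have : (i : ℕ) < j := hj; omega)]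
    · rfl

lemma backSubst_fixed {n l : ℕ} {f : Fin n → (Fin n → ℝ) → ℝ}
    (hdep : ∀ i : Fin n, (i : ℕ) < l → ∀ y z : Fin n → ℝ,
      (∀ j : Fin n, i < j → y j = z j) → f i y = f i z) (x : Fin n → ℝ) (i : Fin n) :
    backSubst l f n x i = if (i : ℕ) < l then x i + f i (backSubst l f n x) else x i :=
  (backSubst_stable hdep x n i (by omega)).symm

/-- Uniqueness of back substitution: the coordinates are determined from the last to the first. -/
lemma triangular_injective {n l : ℕ} {f : Fin n → (Fin n → ℝ) → ℝ}
    (hdep : ∀ i : Fin n, (i : ℕ) < l → ∀ y z : Fin n → ℝ,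
      (∀ j : Fin n, i < j → y j = z j) → f i y = f i z) :
    Function.Injective (fun (y : Fin n → ℝ) (i : Fin n) =>
      if (i : ℕ) < l then y i - f i y else y i) := by
  intro y z h
  have key : ∀ m : ℕ, ∀ i : Fin n, n ≤ i + m → y i = z i := by
    intro m
    induction m with
    | zero => intro i hi; omega
    | succ m ih =>
      intro i hi
      have hi' := congrFun h i
      dsimp only at hi'
      split_ifs at hi' with hil
      · have hf := hdep i hil y z fun j hj => ih j (by have : (i : ℕ) < j := hj; omega)
        linarith
      · exact hi'
  exact funext fun i => key n i (by omega)

lemma contDiff_backSubst {n l : ℕ} {f : Fin n → (Fin n → ℝ) → ℝ}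
    (hfs : ∀ i : Fin n, (i : ℕ) < l → ContDiff ℝ (⊤ : ℕ∞) (f i)) (m : ℕ) :
    ContDiff ℝ (⊤ : ℕ∞) (backSubst l f m) := by
  induction m with
  | zero => exact contDiff_id
  | succ m ih =>
    refine contDiff_pi.2 fun i => ?_
    by_cases hil : (i : ℕ) < l
    · simp only [backSubst, hil, if_true]
      exact (contDiff_apply ℝ ℝ i).add ((hfs i hil).comp ih)
    · simp only [backSubst, hil, if_false]
      exact contDiff_apply ℝ ℝ i

lemma cBoundedMap_backSubst {n l : ℕ} {f : ℝ → Fin n → (Fin n → ℝ) → ℝ}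
    (hfcb : ∀ i : Fin n, (i : ℕ) < l → CBoundedMap (fun ε y => f ε i y)) (m : ℕ) :
    CBoundedMap (fun ε => backSubst l (f ε) m) := by
  induction m with
  | zero => exact .const continuous_id
  | succ m ih =>
    refine .of_apply fun i => ?_
    have hx : CBoundedMap (fun (_ : ℝ) (x : Fin n → ℝ) => x i) := .const (continuous_apply i)
    by_cases hil : (i : ℕ) < l
    · simp only [backSubst, hil, if_true]
      exact (CBoundedMap.const continuous_add).comp (hx.prodMk ((hfcb i hil).comp ih))
    · simpa only [backSubst, hil, if_false] using hx

lemma evModerate_backSubst {n l : ℕ} {f : ℝ → Fin n → (Fin n → ℝ) → ℝ}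
    (hfs : ∀ ε ∈ Set.Ioc (0:ℝ) 1, ∀ i : Fin n, (i : ℕ) < l → ContDiff ℝ (⊤ : ℕ∞) (f ε i))
    (hfcb : ∀ i : Fin n, (i : ℕ) < l → CBoundedMap (fun ε y => f ε i y))
    (hfmod : ∀ i : Fin n, (i : ℕ) < l → ModerateF (fun ε => f ε i)) (m : ℕ) (i : Fin n) :
    EvModerate (fun ε x => backSubst l (f ε) m x i) := by
  have hs : ∀ m, ∀ ε ∈ Set.Ioc (0:ℝ) 1, ContDiff ℝ (⊤ : ℕ∞) (backSubst l (f ε) m) :=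
    fun m ε hε => contDiff_backSubst (hfs ε hε) m
  have hx (i : Fin n) : EvModerate (fun (_ : ℝ) (x : Fin n → ℝ) => x i) :=
    .const (contDiff_apply ℝ ℝ i)
  induction m generalizing i with
  | zero => exact hx i
  | succ m ih =>
    by_cases hil : (i : ℕ) < l
    · simp only [backSubst, hil, if_true]
      exact (hx i).add
        ((moderateF_iff_evModerate.1 (hfmod i hil)).comp (.of_apply (hs m) ih)
          (fun ε hε => hfs ε hε i hil) (hs m) (cBoundedMap_backSubst hfcb m))
        (fun _ _ => contDiff_apply ℝ ℝ i) (fun ε hε => (hfs ε hε i hil).comp (hs m ε hε))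
    · simpa only [backSubst, hil, if_false] using hx i

/-- given c-bounded moderate nets of smooth functions `f_{i,ε}` depending
only on the variables `y_{i+1},…,y_n` (`1 ≤ i ≤ l`), the maps
`Ψ_ε(y) = (y₁ - f_{1,ε}(y₂,…,y_n), …, y_l - f_{l,ε}(y_{l+1},…,y_n), y_{l+1}, …, y_n)`
are (a) smooth diffeomorphisms of `ℝ^n`, with inverse determined by the recursion
`y_i = x_i + f_{i,ε}(y_{i+1},…,y_n)` for `i ≤ l` and `y_i = x_i` for `i > l`;
(b) both `(Ψ_ε)` and `(Ψ_ε^{-1})` are c-bounded and moderate; and (c) in the chart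
`Ψ`, the map `F_ε(x) = (x_k - f_{k,ε}(x_{k+1},…,x_n))_{k≤l}` becomes the projection
onto the first `l` coordinates: `F_ε ∘ Ψ_ε^{-1}(x) = (x₁,…,x_l)`. -/
theorem stmt16 {n l : ℕ} (hl : 1 ≤ l) (hln : l ≤ n)
    (f : ℝ → Fin n → (Fin n → ℝ) → ℝ)
    (hdep : ∀ (ε : ℝ) (i : Fin n), (i : ℕ) < l → ∀ y z : Fin n → ℝ,
      (∀ j : Fin n, i < j → y j = z j) → f ε i y = f ε i z)
    (hfs : ∀ ε ∈ Set.Ioc (0:ℝ) 1, ∀ i : Fin n, (i : ℕ) < l → ContDiff ℝ (⊤ : ℕ∞) (f ε i))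
    (hfcb : ∀ i : Fin n, (i : ℕ) < l → CBoundedMap (fun ε y => f ε i y))
    (hfmod : ∀ i : Fin n, (i : ℕ) < l → ModerateF (fun ε => f ε i))
    (Ψ : ℝ → (Fin n → ℝ) → (Fin n → ℝ))
    (hΨ : ∀ (ε : ℝ) (y : Fin n → ℝ) (i : Fin n),
      Ψ ε y i = if (i : ℕ) < l then y i - f ε i y else y i) :
    ∃ Ψinv : ℝ → (Fin n → ℝ) → (Fin n → ℝ),
      (∀ ε ∈ Set.Ioc (0:ℝ) 1,
        ContDiff ℝ (⊤ : ℕ∞) (Ψ ε) ∧ ContDiff ℝ (⊤ : ℕ∞) (Ψinv ε) ∧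
        Function.LeftInverse (Ψinv ε) (Ψ ε) ∧
        Function.RightInverse (Ψinv ε) (Ψ ε) ∧
        (∀ (x : Fin n → ℝ) (i : Fin n),
          Ψinv ε x i = if (i : ℕ) < l then x i + f ε i (Ψinv ε x) else x i)) ∧
      (CBoundedMap Ψ ∧ CBoundedMap Ψinv ∧ ModerateV Ψ ∧ ModerateV Ψinv) ∧
      (∀ ε ∈ Set.Ioc (0:ℝ) 1, ∀ (x : Fin n → ℝ) (k : Fin n), (k : ℕ) < l →
        Ψinv ε x k - f ε k (Ψinv ε x) = x k) := by
  have hfix := fun ε => backSubst_fixed (hdep ε)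
  have hright : ∀ ε, Function.RightInverse (backSubst l (f ε) n) (Ψ ε) := by
    intro ε x
    funext i
    have h := hfix ε x i
    rw [hΨ]
    split_ifs at h ⊢ <;> linarith
  have hinj : ∀ ε, Function.Injective (Ψ ε) := by
    intro ε
    have h : Ψ ε = fun (y : Fin n → ℝ) (i : Fin n) => if (i : ℕ) < l then y i - f ε i y else y i :=
      funext fun y => funext fun i => hΨ ε y i
    rw [h]
    exact triangular_injective (hdep ε)
  have hx : ∀ i : Fin n, ContDiff ℝ (⊤ : ℕ∞) (fun x : Fin n → ℝ => x i) := contDiff_apply ℝ ℝ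
  refine ⟨fun ε => backSubst l (f ε) n, fun ε hε => ⟨?_, contDiff_backSubst (hfs ε hε) n,
    fun y => hinj ε (hright ε _), hright ε, hfix ε⟩,
    ⟨.of_apply fun i => ?_, cBoundedMap_backSubst hfcb n, fun i => moderateF_iff_evModerate.2 ?_,
      fun i => moderateF_iff_evModerate.2 (evModerate_backSubst hfs hfcb hfmod n i)⟩, ?_⟩
  · refine contDiff_pi.2 fun i => ?_
    by_cases hil : (i : ℕ) < l
    · simp only [hΨ, hil, if_true]
      exact (hx i).sub (hfs ε hε i hil)
    · simpa only [hΨ, hil, if_false] using hx i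
  · have hc : CBoundedMap (fun (_ : ℝ) (x : Fin n → ℝ) => x i) := .const (continuous_apply i)
    by_cases hil : (i : ℕ) < l
    · simp only [hΨ, hil, if_true]
      exact (CBoundedMap.const continuous_sub).comp (hc.prodMk (hfcb i hil))
    · simpa only [hΨ, hil, if_false] using hc
  · by_cases hil : (i : ℕ) < l
    · simp only [hΨ, hil, if_true, sub_eq_add_neg]
      exact (EvModerate.const (hx i)).add (moderateF_iff_evModerate.1 (hfmod i hil)).neg
        (fun _ _ => hx i) (fun ε hε => (hfs ε hε i hil).neg)
    · simpa only [hΨ, hil, if_false] using EvModerate.const (hx i)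
  · intro ε _ x k hk
    have h := hfix ε x k
    rw [if_pos hk] at h
    linarith
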